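/- Let P be one of the following properties of families of metric spaces: δ-hyperbolicity (for a fixed δ), property A, asymptotic dimension at most k (for fixed k∈ℕ), or coarse embeddability into a fixed Banach space E. Let Γ be a finitely generated residually finite group with a box space (Γ/Γ_i)_i. Then Γ (with its word metric) has property P if and only if the box space (Γ/Γ_i)_i has property P piecewise. -/

import Mathlib

/-!
A subset of small diameter in a quotient `Γ / Γ_i` with `i` large is isometric to a subset of `Γ`,
and conversely every ball of `Γ` is isometric to a subset of `Γ / Γ_i` for all large `i`: both hold
because `Γ_i` eventually meets any given ball of `Γ` trivially (`exists_threshold_lift`,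
`exists_ball_equiv`). So, for a suitable threshold function, the piecewise family consists of
subspaces of `Γ`, and for every threshold function it contains a copy of every ball of `Γ`.

All four properties pass to families of subspaces. For property A this uses the push-forward of the
measures along a nearest point map (`propA_of_lift`); in the other cases one restricts.

Conversely, each property holds for `Γ` as soon as it holds uniformly for its balls.
For hyperbolicity this is clear, since four points lie in a common ball. For asymptotic dimension
and property A the covers, respectively the measures, on the balls of radius `N` have an
ultralimit as `N → ∞`, as balls of `Γ` are finite (`asdim_of_balls`, `propA_of_balls`).

For coarse embeddings into a Banach space `E` an ultralimit would take values in an ultrapower of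
`E`. To stay inside `E`, the embeddings `f N` of the balls are glued, following an idea of
Ostrovskii (`exists_glued_map`). Let `φ` be the pointwise weak-* limit of `f N` in the bidual of
`E`, so that `g N = f N - φ` is pointwise weak-* null. For a slowly varying partition of unity
`λ_k` in the word length and a sequence `n_k`, the map
`F = ∑ λ_k f (n_k) = φ + ∑ λ_k g (n_k)` takes values in `E` and is Lipschitz. If `n_k` grows fast
enough, weak-* lower semicontinuity of the norm bounds the partial sums of
`F x - F y`, hence both `φ x - φ y` and the single terms, by `‖F x - F y‖`. At most four weights
are nonzero at points `x`, `y` of comparable length, so that `‖f N x - f N y‖` is bounded by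
`‖F x - F y‖` for some large `N`; for points of very different lengths `‖F y‖` already dominates
`‖F x‖`.
-/

/-!
STATEMENT 9: For P = δ-hyperbolicity, property A, asymptotic dimension ≤ k, or coarse
embeddability into a fixed Banach space E: a finitely generated residually finite group
Γ has P if and only if its box space (Γ/Γ_i) has P piecewise.
-/

open Metric Set

noncomputable def wordLength {G : Type*} [Group G] (S : Set G) (g : G) : ℕ :=
  sInf {n : ℕ | ∃ w : List G, (∀ x ∈ w, x ∈ S) ∧ w.length = n ∧ w.prod = g}

noncomputable def wordDist {G : Type*} [Group G] (S : Set G) (g h : G) : ℝ :=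
  (wordLength S (g⁻¹ * h) : ℝ)

def IsFinSymmGen {G : Type*} [Group G] (S : Set G) : Prop :=
  S.Finite ∧ (∀ s ∈ S, s⁻¹ ∈ S) ∧ Subgroup.closure S = ⊤

def RConn {Z : Type*} (ρ : Z → Z → ℝ) (R : ℝ) (U : Set Z) : Z → Z → Prop :=
  Relation.ReflTransGen (fun a b => a ∈ U ∧ b ∈ U ∧ ρ a b < R)

def FamAsdimLE {ι : Type*} (Z : ι → Type*) (ρ : ∀ i, Z i → Z i → ℝ) (k : ℕ) : Prop :=
  ∀ R : ℕ, 0 < R → ∃ D : ℝ, ∀ i : ι, ∃ U : Fin (k + 1) → Set (Z i),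
    (∀ z : Z i, ∃ j, z ∈ U j) ∧
    ∀ j, ∀ a ∈ U j, ∀ b ∈ U j, RConn (ρ i) (R : ℝ) (U j) a b → ρ i a b ≤ D

def FamPropA {ι : Type*} (Z : ι → Type*) (ρ : ∀ i, Z i → Z i → ℝ) : Prop :=
  ∀ R : ℕ, 0 < R → ∃ Sb : ℕ, ∀ i : ι, ∃ f : Z i → Z i → ℝ,
    (∀ x y, 0 ≤ f x y) ∧ (∀ x, HasSum (f x) 1) ∧
    (∀ x y, f x y ≠ 0 → ρ i x y ≤ Sb) ∧
    ∀ x x', ρ i x x' ≤ R → (∑' y, |f x y - f x' y|) ≤ 1 / R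

def FamCE {ι : Type*} (Z : ι → Type*) (ρ : ∀ i, Z i → Z i → ℝ)
    {E : Type*} (dE : E → E → ℝ) : Prop :=
  ∃ (f : ∀ i, Z i → E) (ρm ρp : ℝ → ℝ), Monotone ρm ∧ Monotone ρp ∧
    Filter.Tendsto ρm Filter.atTop Filter.atTop ∧
    Filter.Tendsto ρp Filter.atTop Filter.atTop ∧
    ∀ i x x', ρm (ρ i x x') ≤ dE (f i x) (f i x') ∧ dE (f i x) (f i x') ≤ ρp (ρ i x x')

/-- Gromov's four-point condition with constant δ, uniformly over a family. -/
def FamHyp {ι : Type*} (Z : ι → Type*) (ρ : ∀ i, Z i → Z i → ℝ) (δ : ℝ) : Prop :=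
  ∀ i, ∀ x y z w : Z i,
    ρ i x y + ρ i z w ≤ max (ρ i x z + ρ i y w) (ρ i x w + ρ i y z) + 2 * δ

/-- The index type of the piecewise family `⋃_R Y^R_{j(R)+}`. -/
def PW {ι : Type} [Preorder ι] (Z : ι → Type) (ρ : ∀ i, Z i → Z i → ℝ)
    (j : ℕ → ι) : Type :=
  Σ R : ℕ, Σ i : ι, {A : Set (Z i) // j R ≤ i ∧ ∀ a ∈ A, ∀ b ∈ A, ρ i a b ≤ (R : ℝ)}

def pwZ {ι : Type} [Preorder ι] {Z : ι → Type} {ρ : ∀ i, Z i → Z i → ℝ}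
    {j : ℕ → ι} (p : PW Z ρ j) : Type := ↥p.2.2.1

def pwρ {ι : Type} [Preorder ι] {Z : ι → Type} {ρ : ∀ i, Z i → Z i → ℝ}
    {j : ℕ → ι} (p : PW Z ρ j) : pwZ p → pwZ p → ℝ := fun a b => ρ p.2.1 a.1 b.1

/-! ### The word metric -/

section Words

variable {Γ : Type} [Group Γ] {S : Set Γ}

lemma wordLength_le (w : List Γ) (hw : ∀ x ∈ w, x ∈ S) : wordLength S w.prod ≤ w.length :=
  Nat.sInf_le ⟨w, hw, rfl, rfl⟩

lemma exists_word (hS : IsFinSymmGen S) (g : Γ) :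
    ∃ w : List Γ, (∀ x ∈ w, x ∈ S) ∧ w.length = wordLength S g ∧ w.prod = g := by
  have hne : {n : ℕ | ∃ w : List Γ, (∀ x ∈ w, x ∈ S) ∧ w.length = n ∧ w.prod = g}.Nonempty := by
    have hg : g ∈ (Subgroup.closure S).toSubmonoid := by rw [hS.2.2]; trivial
    rw [Subgroup.closure_toSubmonoid] at hg
    obtain ⟨w, hw, hp⟩ := Submonoid.exists_list_of_mem_closure hg
    refine ⟨w.length, w, fun x hx => ?_, rfl, hp⟩
    rcases hw x hx with h | h
    · exact h
    · simpa using hS.2.1 _ h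
  exact Nat.sInf_mem hne

lemma wordLength_one : wordLength S (1 : Γ) = 0 := by
  have := wordLength_le (S := S) ([] : List Γ) (by simp)
  simpa using this

lemma wordLength_mul_le (hS : IsFinSymmGen S) (g h : Γ) :
    wordLength S (g * h) ≤ wordLength S g + wordLength S h := by
  obtain ⟨u, hu, hul, rfl⟩ := exists_word hS g
  obtain ⟨v, hv, hvl, rfl⟩ := exists_word hS h
  rw [← hul, ← hvl, ← List.prod_append, ← List.length_append]
  refine wordLength_le _ fun x hx => ?_
  rcases List.mem_append.1 hx with h | h
  exacts [hu x h, hv x h]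

lemma wordLength_inv_le (hS : IsFinSymmGen S) (g : Γ) :
    wordLength S g⁻¹ ≤ wordLength S g := by
  obtain ⟨u, hu, hul, hp⟩ := exists_word hS g
  rw [← hul, ← hp, List.prod_inv_reverse]
  refine (wordLength_le _ fun x hx => ?_).trans (by simp)
  simp only [List.mem_reverse, List.mem_map] at hx
  obtain ⟨y, hy, rfl⟩ := hx
  exact hS.2.1 _ (hu y hy)

lemma wordLength_inv (hS : IsFinSymmGen S) (g : Γ) : wordLength S g⁻¹ = wordLength S g :=
  le_antisymm (wordLength_inv_le hS g) (by simpa using wordLength_inv_le hS g⁻¹)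

lemma eq_one_of_wordLength (hS : IsFinSymmGen S) {g : Γ} (h : wordLength S g = 0) : g = 1 := by
  obtain ⟨u, -, hul, hp⟩ := exists_word hS g
  rw [h, List.length_eq_zero_iff] at hul
  simpa [hul] using hp.symm

/-- A nontrivial element is a shorter one times the last letter of a geodesic word. -/
lemma exists_penultimate (hS : IsFinSymmGen S) {g : Γ} {n : ℕ} (h : wordLength S g = n + 1) :
    ∃ z s : Γ, g = z * s ∧ wordLength S z ≤ n ∧ wordLength S s ≤ 1 := by
  obtain ⟨u, hu, hul, hp⟩ := exists_word hS g
  rcases List.eq_nil_or_concat u with rfl | ⟨v, s, rfl⟩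
  · simp [h] at hul
  · refine ⟨v.prod, s, by simpa using hp.symm, ?_, ?_⟩
    · refine (wordLength_le v fun x hx => hu x (by simp [hx])).trans ?_
      simp at hul; omega
    · simpa using wordLength_le [s] (fun x hx => hu x (by simp at hx; simp [hx]))

lemma finite_ball (hS : IsFinSymmGen S) (n : ℕ) : {g : Γ | wordLength S g ≤ n}.Finite := by
  have := hS.1.to_subtype
  have hfin := (List.finite_length_le S n).image (fun w => (w.map Subtype.val).prod)
  refine hfin.subset fun g hg => ?_
  obtain ⟨u, hu, hul, hp⟩ := exists_word hS g
  lift u to List S using hu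
  exact ⟨u, by simpa [← hul] using hg, hp⟩

lemma wordDist_triangle (hS : IsFinSymmGen S) (x y z : Γ) :
    wordDist S x z ≤ wordDist S x y + wordDist S y z := by
  unfold wordDist
  have := wordLength_mul_le hS (x⁻¹ * y) (y⁻¹ * z)
  rw [show x⁻¹ * y * (y⁻¹ * z) = x⁻¹ * z by group] at this
  exact_mod_cast this

lemma wordDist_comm (hS : IsFinSymmGen S) (x y : Γ) : wordDist S x y = wordDist S y x := by
  unfold wordDist
  rw [← wordLength_inv hS (x⁻¹ * y)]
  simp

lemma wordDist_le_add (hS : IsFinSymmGen S) (x y : Γ) :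
    wordLength S (x⁻¹ * y) ≤ wordLength S x + wordLength S y := by
  simpa [wordLength_inv hS] using wordLength_mul_le hS x⁻¹ y

lemma eq_of_wordDist (hS : IsFinSymmGen S) {x y : Γ} (h : wordDist S x y = 0) : x = y := by
  have := eq_one_of_wordLength hS (g := x⁻¹ * y) (by unfold wordDist at h; exact_mod_cast h)
  exact inv_mul_eq_one.1 this

end Words

/-! ### Isometries between balls of the group and pieces of the box space -/

section Box

variable {Γ : Type} [Group Γ] {S : Set Γ} {Gsub : ℕ → Subgroup Γ}
  {dQ : ∀ i, Γ ⧸ Gsub i → Γ ⧸ Gsub i → ℝ}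

/-- The subgroups of the chain eventually meet any given ball in the identity only. -/
lemma exists_trivial_on_ball (hS : IsFinSymmGen S) (hnested : ∀ i, Gsub (i + 1) ≤ Gsub i)
    (htriv : (⨅ i, Gsub i) = ⊥) (n : ℕ) :
    ∃ i₀, ∀ i ≥ i₀, ∀ g ∈ Gsub i, wordLength S g ≤ n → g = 1 := by
  have hanti : Antitone Gsub := antitone_nat_of_succ_le hnested
  have h1 : ∀ g : Γ, ∀ᶠ i in Filter.atTop, g ∈ Gsub i → g = 1 := by
    intro g
    by_cases hg : g = 1
    · simp [hg]
    · have : g ∉ ⨅ i, Gsub i := by rw [htriv]; simpa using hg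
      simp only [Subgroup.mem_iInf, not_forall] at this
      obtain ⟨i, hi⟩ := this
      filter_upwards [Filter.eventually_ge_atTop i] with k hk hmem
      exact absurd (hanti hk hmem) hi
  have h2 := ((finite_ball hS n).eventually_all (l := Filter.atTop)).2 (fun g _ => h1 g)
  obtain ⟨i₀, h⟩ := Filter.eventually_atTop.1 h2
  exact ⟨i₀, fun i hi g hg hn => h i hi g hn hg⟩

lemma dQ_le (hdQ : ∀ (i : ℕ) (g h : Γ), dQ i (QuotientGroup.mk g) (QuotientGroup.mk h) =
      sInf ((fun n => (wordLength S (g⁻¹ * h * n) : ℝ)) '' (Gsub i : Set Γ)))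
    {i : ℕ} (g h : Γ) {n : Γ} (hn : n ∈ Gsub i) :
    dQ i (QuotientGroup.mk g) (QuotientGroup.mk h) ≤ wordLength S (g⁻¹ * h * n) := by
  rw [hdQ]
  exact csInf_le ⟨0, by rintro _ ⟨m, -, rfl⟩; positivity⟩ ⟨n, hn, rfl⟩

/-- Word lengths are natural numbers, so the infimum defining the quotient metric is attained. -/
lemma dQ_attained (hdQ : ∀ (i : ℕ) (g h : Γ), dQ i (QuotientGroup.mk g) (QuotientGroup.mk h) =
      sInf ((fun n => (wordLength S (g⁻¹ * h * n) : ℝ)) '' (Gsub i : Set Γ)))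
    (i : ℕ) (g h : Γ) : ∃ n ∈ Gsub i,
    dQ i (QuotientGroup.mk g) (QuotientGroup.mk h) = wordLength S (g⁻¹ * h * n) := by
  obtain ⟨n, hn, hmin⟩ := exists_minimalFor_of_wellFoundedLT
    (fun n => n ∈ Gsub i) (fun n => wordLength S (g⁻¹ * h * n)) ⟨1, (Gsub i).one_mem⟩
  refine ⟨n, hn, le_antisymm (dQ_le hdQ g h hn) ?_⟩
  rw [hdQ]
  refine le_csInf ⟨_, ⟨1, (Gsub i).one_mem, rfl⟩⟩ ?_
  rintro _ ⟨m, hm, rfl⟩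
  rcases le_total (wordLength S (g⁻¹ * h * n)) (wordLength S (g⁻¹ * h * m)) with h1 | h1
  · exact Nat.cast_le.2 h1
  · exact Nat.cast_le.2 (hmin hm h1)

/-- If `Γ_i` meets the ball of radius `3 * R` trivially, then every subset of `Γ/Γ_i` of diameter at
most `R` lifts isometrically to `Γ`: fix a base point and lift every other point along a shortest
word. -/
lemma exists_isometric_lift (hS : IsFinSymmGen S)
    (hdQ : ∀ (i : ℕ) (g h : Γ), dQ i (QuotientGroup.mk g) (QuotientGroup.mk h) =
      sInf ((fun n => (wordLength S (g⁻¹ * h * n) : ℝ)) '' (Gsub i : Set Γ)))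
    {i R : ℕ} (hi : ∀ g ∈ Gsub i, wordLength S g ≤ 3 * R → g = 1)
    (A : Set (Γ ⧸ Gsub i)) (hA : ∀ a ∈ A, ∀ b ∈ A, dQ i a b ≤ (R : ℝ)) :
    ∃ c : A → Γ, ∀ a b : A, wordDist S (c a) (c b) = dQ i a b := by
  rcases isEmpty_or_nonempty A with hE | ⟨⟨a₀, ha₀⟩⟩
  · exact ⟨fun a => hE.elim a, fun a => hE.elim a⟩
  obtain ⟨g₀, rfl⟩ := QuotientGroup.mk_surjective a₀
  have hl : ∀ a : A, ∃ g : Γ, (QuotientGroup.mk g : Γ ⧸ Gsub i) = a ∧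
      wordLength S (g₀⁻¹ * g) ≤ R := by
    rintro ⟨a, ha⟩
    obtain ⟨g, rfl⟩ := QuotientGroup.mk_surjective a
    obtain ⟨n, hn, he⟩ := dQ_attained hdQ i g₀ g
    refine ⟨g * n, QuotientGroup.mk_mul_of_mem g hn, ?_⟩
    have := hA _ ha₀ _ ha
    rw [he, mul_assoc] at this
    exact_mod_cast this
  choose c hc hcR using hl
  refine ⟨c, fun a b => ?_⟩
  obtain ⟨n, hn, he⟩ := dQ_attained hdQ i (c a) (c b)
  have hab := hA a a.2 b b.2
  rw [← hc a, ← hc b] at hab ⊢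
  have h1 : wordLength S ((c a)⁻¹ * c b * n) ≤ R := by rw [he] at hab; exact_mod_cast hab
  have h2 : wordLength S ((c a)⁻¹ * c b) ≤ R + R := by
    have := wordDist_le_add hS (g₀⁻¹ * c a) (g₀⁻¹ * c b)
    rw [show (g₀⁻¹ * c a)⁻¹ * (g₀⁻¹ * c b) = (c a)⁻¹ * c b by group] at this
    exact this.trans (add_le_add (hcR a) (hcR b))
  have h3 : wordLength S n ≤ 3 * R := by
    have := wordDist_le_add hS ((c a)⁻¹ * c b) ((c a)⁻¹ * c b * n)
    rw [show ((c a)⁻¹ * c b)⁻¹ * ((c a)⁻¹ * c b * n) = n by group] at this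
    omega
  rw [he, hi n hn h3, mul_one]
  rfl

/-- If `Γ_i` meets the ball of radius `4 * N` trivially, the quotient map is isometric on the ball of
radius `N`. -/
lemma dQ_eq_on_ball (hS : IsFinSymmGen S)
    (hdQ : ∀ (i : ℕ) (g h : Γ), dQ i (QuotientGroup.mk g) (QuotientGroup.mk h) =
      sInf ((fun n => (wordLength S (g⁻¹ * h * n) : ℝ)) '' (Gsub i : Set Γ)))
    {i N : ℕ} (hi : ∀ g ∈ Gsub i, wordLength S g ≤ 4 * N → g = 1)
    {x y : Γ} (hx : wordLength S x ≤ N) (hy : wordLength S y ≤ N) :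
    dQ i (QuotientGroup.mk x) (QuotientGroup.mk y) = wordDist S x y := by
  obtain ⟨n, hn, he⟩ := dQ_attained hdQ i x y
  have h1 := wordDist_le_add hS x y
  have h2 : wordLength S (x⁻¹ * y * n) ≤ wordLength S (x⁻¹ * y) := by
    have := dQ_le hdQ x y (Gsub i).one_mem
    rw [he, mul_one] at this
    exact_mod_cast this
  have h3 : wordLength S n ≤ 4 * N := by
    have := wordDist_le_add hS (x⁻¹ * y) (x⁻¹ * y * n)
    rw [show (x⁻¹ * y)⁻¹ * (x⁻¹ * y * n) = n by group] at this
    omega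
  rw [he, hi n hn h3, mul_one]
  rfl

/-- Every ball of `Γ` is isometric to a member of the piecewise family. -/
lemma exists_ball_equiv (hS : IsFinSymmGen S) (hnested : ∀ i, Gsub (i + 1) ≤ Gsub i)
    (htriv : (⨅ i, Gsub i) = ⊥)
    (hdQ : ∀ (i : ℕ) (g h : Γ), dQ i (QuotientGroup.mk g) (QuotientGroup.mk h) =
      sInf ((fun n => (wordLength S (g⁻¹ * h * n) : ℝ)) '' (Gsub i : Set Γ)))
    (j : ℕ → ℕ) (N : ℕ) :
    ∃ (p : PW (fun i => Γ ⧸ Gsub i) dQ j) (e : {x : Γ // wordLength S x ≤ N} ≃ pwZ p),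
      ∀ x y, pwρ p (e x) (e y) = wordDist S x.1 y.1 := by
  obtain ⟨i₀, hi₀⟩ := exists_trivial_on_ball hS hnested htriv (4 * N)
  set i := max i₀ (j (2 * N))
  have hi := hi₀ i (le_max_left _ _)
  let q : {x : Γ // wordLength S x ≤ N} → Γ ⧸ Gsub i := fun x => QuotientGroup.mk x.1
  have hq : ∀ x y, dQ i (q x) (q y) = wordDist S x.1 y.1 := fun x y =>
    dQ_eq_on_ball hS hdQ hi x.2 y.2
  have hinj : Function.Injective q := by
    intro x y hxy
    refine Subtype.ext (eq_of_wordDist hS ?_)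
    rw [← hq x y, ← hxy, hq x x]
    simp [wordDist, wordLength_one]
  refine ⟨⟨2 * N, i, Set.range q, le_max_right _ _, ?_⟩, Equiv.ofInjective q hinj,
    fun x y => hq x y⟩
  rintro _ ⟨x, rfl⟩ _ ⟨y, rfl⟩
  rw [hq]
  have := wordDist_le_add hS x.1 y.1
  have hx := x.2
  have hy := y.2
  unfold wordDist
  exact_mod_cast (by omega : wordLength S (x.1⁻¹ * y.1) ≤ 2 * N)

/-- For a suitable threshold `j`, every member of the piecewise family is isometric to a subset
of `Γ`. -/
lemma exists_threshold_lift (hS : IsFinSymmGen S) (hnested : ∀ i, Gsub (i + 1) ≤ Gsub i)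
    (htriv : (⨅ i, Gsub i) = ⊥)
    (hdQ : ∀ (i : ℕ) (g h : Γ), dQ i (QuotientGroup.mk g) (QuotientGroup.mk h) =
      sInf ((fun n => (wordLength S (g⁻¹ * h * n) : ℝ)) '' (Gsub i : Set Γ))) :
    ∃ j : ℕ → ℕ, ∀ p : PW (fun i => Γ ⧸ Gsub i) dQ j,
      ∃ c : pwZ p → Γ, ∀ a b, wordDist S (c a) (c b) = pwρ p a b := by
  choose j hj using fun R : ℕ => exists_trivial_on_ball hS hnested htriv (3 * R)
  refine ⟨j, ?_⟩
  rintro ⟨R, i, A, hi, hA⟩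
  exact exists_isometric_lift hS hdQ (hj R i hi) A hA

end Box

/-! ### Ultralimits -/

section Ultralimits

lemma exists_tendsto_of_bounded (U : Ultrafilter ℕ) {u : ℕ → ℝ} {a b : ℝ}
    (h : ∀ᶠ n in (U : Filter ℕ), u n ∈ Icc a b) :
    ∃ l, Filter.Tendsto u U (nhds l) := by
  obtain ⟨l, -, hl⟩ := isCompact_Icc.ultrafilter_le_nhds' (U.map u) h
  exact ⟨l, hl⟩

variable {E : Type} [NormedAddCommGroup E] [NormedSpace ℝ E]

/-- A bounded sequence has a weak-* limit in the bidual along any ultrafilter (Banach–Alaoglu). -/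
lemma exists_bidual_limit (U : Ultrafilter ℕ) {u : ℕ → E} {b : ℝ}
    (h : ∀ᶠ n in (U : Filter ℕ), ‖u n‖ ≤ b) :
    ∃ φ : StrongDual ℝ (StrongDual ℝ E),
      ∀ ψ : StrongDual ℝ E, Filter.Tendsto (fun n => ψ (u n)) U (nhds (φ ψ)) := by
  let v : ℕ → WeakDual ℝ (StrongDual ℝ E) := fun n =>
    StrongDual.toWeakDual (NormedSpace.inclusionInDoubleDual ℝ E (u n))
  have hv : ∀ᶠ n in (U : Filter ℕ),
      v n ∈ WeakDual.toStrongDual ⁻¹' (closedBall (0 : StrongDual ℝ (StrongDual ℝ E)) b) := by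
    filter_upwards [h] with n hn
    have hb : NormedSpace.inclusionInDoubleDual ℝ E (u n) ∈
        closedBall (0 : StrongDual ℝ (StrongDual ℝ E)) b :=
      (mem_closedBall_zero_iff (E := StrongDual ℝ (StrongDual ℝ E))).2
        ((NormedSpace.double_dual_bound ℝ E (u n)).trans hn)
    exact hb
  have hc := WeakDual.isCompact_closedBall (𝕜 := ℝ) (0 : StrongDual ℝ (StrongDual ℝ E)) b
  obtain ⟨φ, -, hφ⟩ := hc.ultrafilter_le_nhds' (U.map v) hv
  refine ⟨WeakDual.toStrongDual φ, fun ψ => ?_⟩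
  exact ((WeakDual.eval_continuous ψ).tendsto φ).comp hφ

end Ultralimits

/-! ### A slowly varying partition of unity on `ℕ` -/

section Weights

/-- The function rising from `0` on `[0, t k - 1]` to `1` on `[2 * t k, ∞)`, with slope
`1 / (t k + 1)`. For `t k = 0` it is constantly `1`. -/
noncomputable def ramp (t : ℕ → ℕ) (k n : ℕ) : ℝ :=
  max 0 (min 1 (((n : ℝ) + 1 - t k) / (t k + 1)))

/-- The partition of unity attached to the scales `t`: the `k`-th weight lives on
`[t k, 2 * t (k + 1)]`. -/
noncomputable def weight (t : ℕ → ℕ) (k n : ℕ) : ℝ := ramp t k n - ramp t (k + 1) n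

variable {t : ℕ → ℕ}

lemma ramp_nonneg (k n : ℕ) : 0 ≤ ramp t k n := le_max_left _ _

lemma ramp_le_one (k n : ℕ) : ramp t k n ≤ 1 := max_le zero_le_one (min_le_left _ _)

lemma ramp_eq_one {k n : ℕ} (h : 2 * t k ≤ n) : ramp t k n = 1 := by
  have h' : (2 * t k : ℝ) ≤ n := by exact_mod_cast h
  have : (1 : ℝ) ≤ ((n : ℝ) + 1 - t k) / (t k + 1) := by
    rw [le_div_iff₀ (by positivity)]; linarith
  rw [ramp, min_eq_left this, max_eq_right zero_le_one]

lemma ramp_eq_zero {k n : ℕ} (h : n + 1 ≤ t k) : ramp t k n = 0 := by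
  have h' : (n + 1 : ℝ) ≤ t k := by exact_mod_cast h
  have : ((n : ℝ) + 1 - t k) / (t k + 1) ≤ 0 :=
    div_nonpos_of_nonpos_of_nonneg (by linarith) (by positivity)
  rw [ramp, max_eq_left]
  exact (min_le_right _ _).trans this

lemma abs_ramp_sub_le (k : ℕ) {n n' : ℕ} (h : n ≤ n' + 1) (h' : n' ≤ n + 1) :
    |ramp t k n - ramp t k n'| ≤ 1 / (t k + 1) := by
  have h1 : (n : ℝ) ≤ n' + 1 := by exact_mod_cast h
  have h2 : (n' : ℝ) ≤ n + 1 := by exact_mod_cast h'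
  unfold ramp
  rw [max_comm 0, max_comm 0]
  refine (abs_max_sub_max_le_abs _ _ _).trans ?_
  rw [min_comm 1, min_comm 1]
  refine (abs_inf_sub_inf_le_abs _ _ _).trans ?_
  rw [← sub_div, abs_div, abs_of_pos (by positivity : (0 : ℝ) < t k + 1)]
  gcongr
  rw [abs_le]
  constructor <;> linarith

lemma scale_mono (ht : ∀ k, 2 * t k + 1 ≤ t (k + 1)) : StrictMono t :=
  strictMono_nat_of_lt_succ fun k => by have := ht k; omega

lemma weight_nonneg (ht : ∀ k, 2 * t k + 1 ≤ t (k + 1)) (k n : ℕ) : 0 ≤ weight t k n := by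
  rw [weight, sub_nonneg]
  rcases le_or_gt (n + 1) (t (k + 1)) with h | h
  · rw [ramp_eq_zero h]; exact ramp_nonneg _ _
  · rw [ramp_eq_one (k := k) (by have := ht k; omega)]; exact ramp_le_one _ _

lemma weight_eq_zero_of_lt (ht : ∀ k, 2 * t k + 1 ≤ t (k + 1)) {k n : ℕ} (h : n + 1 ≤ t k) :
    weight t k n = 0 := by
  rw [weight, ramp_eq_zero h, ramp_eq_zero, sub_zero]
  have := ht k; omega

lemma weight_eq_zero_of_ge (ht : ∀ k, 2 * t k + 1 ≤ t (k + 1)) {k n : ℕ}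
    (h : 2 * t (k + 1) ≤ n) : weight t k n = 0 := by
  rw [weight, ramp_eq_one h, ramp_eq_one, sub_self]
  have := ht k; omega

lemma sum_weight (h0 : t 0 = 0) {m n : ℕ} (h : n + 1 ≤ t m) :
    ∑ k ∈ Finset.range m, weight t k n = 1 := by
  unfold weight
  rw [Finset.sum_range_sub', ramp_eq_zero h, ramp_eq_one (by simp [h0]), sub_zero]

/-- At most one ramp changes between two neighbouring integers `n` and `n'`, and it does so by an
amount of order `1 / n'`. -/
lemma sum_abs_ramp_sub_le (ht : ∀ k, 2 * t k + 1 ≤ t (k + 1)) (s : Finset ℕ) {n n' : ℕ}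
    (h : n ≤ n' + 1) (h' : n' ≤ n + 1) :
    ∑ k ∈ s, |ramp t k n - ramp t k n'| * n' ≤ 2 := by
  have hmono := (scale_mono ht).monotone
  have hne : ∀ k, ramp t k n - ramp t k n' ≠ 0 →
      (t k ≤ n ∨ t k ≤ n') ∧ (n < 2 * t k ∨ n' < 2 * t k) := by
    intro k hk
    refine ⟨?_, ?_⟩
    · by_contra! hc
      exact hk (by rw [ramp_eq_zero (by omega), ramp_eq_zero (by omega), sub_self])
    · by_contra! hc
      exact hk (by rw [ramp_eq_one hc.1, ramp_eq_one hc.2, sub_self])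
  have huniq : ∀ a b, ramp t a n - ramp t a n' ≠ 0 → ramp t b n - ramp t b n' ≠ 0 → ¬ a < b := by
    intro a b ha hb hab
    have h1 := hne a ha
    have h2 := hne b hb
    have h3 := ht a
    have h4 := hmono (Nat.succ_le_of_lt hab)
    simp only [Nat.succ_eq_add_one] at h4
    omega
  by_cases hex : ∃ k ∈ s, ramp t k n - ramp t k n' ≠ 0
  · obtain ⟨k, hks, hk⟩ := hex
    rw [Finset.sum_eq_single_of_mem k hks]
    · have h1 := hne k hk
      have h2 : (n' : ℝ) ≤ 2 * t k := by exact_mod_cast (by omega : n' ≤ 2 * t k)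
      calc |ramp t k n - ramp t k n'| * n' ≤ 1 / (t k + 1) * (2 * t k) :=
            mul_le_mul (abs_ramp_sub_le k h h') h2 (by positivity) (by positivity)
        _ ≤ 2 := by
            rw [one_div, inv_mul_le_iff₀ (by positivity)]; linarith
    · intro b _ hbk
      by_contra hb
      have hb' : ramp t b n - ramp t b n' ≠ 0 := fun h0 => hb (by simp [h0])
      rcases lt_or_gt_of_ne hbk with hlt | hlt
      · exact huniq _ _ hb' hk hlt
      · exact huniq _ _ hk hb' hlt
  · push Not at hex
    rw [Finset.sum_eq_zero (fun k hk => by simp [hex k hk])]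
    norm_num

/-- The weights vary slowly: their total variation between neighbouring integers is of order
`1 / n'`. This is what makes a weighted sum of Lipschitz maps fixing the base point Lipschitz. -/
lemma sum_abs_weight_sub_le (ht : ∀ k, 2 * t k + 1 ≤ t (k + 1)) (m : ℕ) {n n' : ℕ}
    (h : n ≤ n' + 1) (h' : n' ≤ n + 1) :
    ∑ k ∈ Finset.range m, |weight t k n - weight t k n'| * n' ≤ 4 := by
  have h1 := sum_abs_ramp_sub_le ht (Finset.range m) h h'
  have h2 := sum_abs_ramp_sub_le ht ((Finset.range m).image (· + 1)) h h'
  rw [Finset.sum_image (by simp)] at h2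
  have h3 : ∑ k ∈ Finset.range m, |weight t k n - weight t k n'| * n' ≤
      ∑ k ∈ Finset.range m, (|ramp t k n - ramp t k n'| * n' +
        |ramp t (k + 1) n - ramp t (k + 1) n'| * n') := by
    refine Finset.sum_le_sum fun k _ => ?_
    rw [← add_mul]
    refine mul_le_mul_of_nonneg_right ?_ (by positivity)
    rw [show weight t k n - weight t k n' = (ramp t k n - ramp t k n') -
      (ramp t (k + 1) n - ramp t (k + 1) n') by unfold weight; ring]
    exact abs_sub _ _
  rw [Finset.sum_add_distrib] at h3
  linarith

/-- Scales growing so fast that `ρ` beyond `t (k + 1)` dominates a large multiple of `t k`. -/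
lemma exists_scales {ρ : ℕ → ℝ} (hρ : Filter.Tendsto ρ Filter.atTop Filter.atTop) :
    ∃ t : ℕ → ℕ, t 0 = 0 ∧ (∀ k, 2 * t k + 1 ≤ t (k + 1)) ∧
      ∀ k m, t (k + 1) ≤ m → ((k : ℝ) + 1) * (t k + 1) ≤ ρ m := by
  have hT : ∀ c : ℝ, ∃ T : ℕ, ∀ m, T ≤ m → c ≤ ρ m := fun c =>
    Filter.eventually_atTop.1 (hρ.eventually_ge_atTop c)
  choose T hT using hT
  refine ⟨fun k => Nat.rec 0 (fun k s => max (2 * s + 1) (T (((k : ℝ) + 1) * (s + 1)))) k, rfl,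
    fun k => le_max_left _ _, fun k m h => hT _ _ ((le_max_right _ _).trans h)⟩

lemma exists_scale_index (h0 : t 0 = 0) (ht : ∀ k, 2 * t k + 1 ≤ t (k + 1)) (n : ℕ) :
    ∃ k, 2 * t k ≤ n ∧ n < 2 * t (k + 1) := by
  have hex : ∃ k, n < 2 * t k := ⟨n + 1, by have := (scale_mono ht).le_apply (x := n + 1); omega⟩
  classical
  obtain ⟨k, hk⟩ : ∃ k, Nat.find hex = k + 1 := by
    refine Nat.exists_eq_succ_of_ne_zero fun h => ?_
    have := Nat.find_spec hex
    rw [h, h0] at this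
    omega
  refine ⟨k, not_lt.1 (Nat.find_min hex (by omega)), ?_⟩
  rw [← hk]; exact Nat.find_spec hex

end Weights

/-! ### Coarse embeddability into a Banach space is finitely determined -/

section Gluing

variable {E : Type} [NormedAddCommGroup E] [NormedSpace ℝ E]

/-- Adding the members of a weak-* null sequence does not decrease the norm of a fixed element of
a dual space by much. -/
lemma norm_le_norm_add_of_null (U : Ultrafilter ℕ) (u : StrongDual ℝ (StrongDual ℝ E))
    (v : ℕ → StrongDual ℝ (StrongDual ℝ E))
    (hv : ∀ ψ, Filter.Tendsto (fun n => v n ψ) U (nhds 0)) :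
    ∀ᶠ n in (U : Filter ℕ), ‖u‖ ≤ ‖u + v n‖ + 1 := by
  obtain ⟨ψ, hψ, hu⟩ := u.exists_lt_apply_of_lt_opNorm (r := ‖u‖ - 1 / 2) (by linarith)
  have h0 := (hv ψ).norm
  rw [norm_zero] at h0
  filter_upwards [h0.eventually_lt_const (by norm_num : (0 : ℝ) < 1 / 2)] with n hn
  have h1 : ‖(u + v n) ψ‖ ≤ ‖u + v n‖ := (u + v n).unit_le_opNorm ψ hψ.le
  have h2 : ‖u ψ‖ ≤ ‖(u + v n) ψ‖ + ‖v n ψ‖ := by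
    simpa using norm_sub_le ((u + v n) ψ) (v n ψ)
  linarith

/-- A bounded real sequence is eventually below almost all of its own terms, up to `1`. -/
lemma eventually_eventually_le (U : Ultrafilter ℕ) {a : ℕ → ℝ} {b : ℝ}
    (ha : ∀ᶠ n in (U : Filter ℕ), a n ∈ Icc 0 b) :
    ∀ᶠ n in (U : Filter ℕ), ∀ᶠ n' in (U : Filter ℕ), a n' ≤ a n + 1 := by
  obtain ⟨l, hl⟩ := exists_tendsto_of_bounded U ha
  filter_upwards [hl.eventually_const_lt (by linarith : l - 1 / 2 < l)] with n hn
  filter_upwards [hl.eventually_lt_const (by linarith : l < l + 1 / 2)] with n' hn'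
  linarith

/-- Gluing along a limit map. Suppose that `f N : X → E` become, on every pair of points, Lipschitz
and expanding with common control, and that the differences `g N = f N - φ` to a map `φ` into a
larger normed space are asymptotically null in the sense that adding `a • g N x - b • g N y` does
not decrease the norm of a fixed vector by much (`hnull`).

With a slowly varying partition of unity `λ_k` and indices `n_k`, the glued map is
`F = ∑ λ_k f (n_k) = φ + ∑ λ_k g (n_k)`. The `n_k` are chosen one after the other so that each new
term hardly decreases the norm of the differences of the earlier partial sums; hence all the
summands of `F x - F y` are controlled by `‖F x - F y‖`, and so is `‖f N x - f N y‖` for suitable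
`N` when `x` and `y` are of comparable length. When `y` is much longer than `x`, the base point
takes the role of `x`. -/
theorem exists_glued_map_of_limit {Y : Type} [NormedAddCommGroup Y] [NormedSpace ℝ Y]
    (ι : E →ₗᵢ[ℝ] Y) {X : Type} (φ : X → Y) (o : X) (hφo : φ o = 0) (l : X → ℕ) (d : X → X → ℕ)
    (hlo : l o = 0) (hfin : ∀ n, {x | l x ≤ n}.Finite)
    (hd : ∀ x y, d x y ≤ l x + l y) (hdo : ∀ y, d o y = l y)
    (hadj : ∀ x y, d x y ≤ 1 → l x ≤ l y + 1 ∧ l y ≤ l x + 1)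
    (U : Ultrafilter ℕ) (f : ℕ → X → E) (hfo : ∀ N, f N o = 0) (C : ℝ) (hC : 0 ≤ C)
    (hf1 : ∀ x, ∀ᶠ N in (U : Filter ℕ), ‖f N x‖ ≤ C * l x)
    (hf2 : ∀ x y, d x y ≤ 1 → ∀ᶠ N in (U : Filter ℕ), ‖f N x - f N y‖ ≤ C)
    (ρ : ℕ → ℝ) (hρ : Filter.Tendsto ρ Filter.atTop Filter.atTop)
    (hf3 : ∀ x y, ∀ᶠ N in (U : Filter ℕ), ρ (d x y) ≤ ‖f N x - f N y‖)
    (hnull : ∀ (u : Y) (x y : X) (a b : ℝ), ∀ᶠ N in (U : Filter ℕ),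
      ‖u‖ ≤ ‖u + (a • (ι (f N x) - φ x) - b • (ι (f N y) - φ y))‖ + 1) :
    ∃ F : X → E, (∀ x y, d x y ≤ 1 → ‖F x - F y‖ ≤ 5 * C) ∧
      ∀ M : ℝ, ∃ D : ℕ, ∀ x y, ‖F x - F y‖ ≤ M → d x y ≤ D := by
  obtain ⟨t, ht0, ht, htρ⟩ := exists_scales hρ
  have htm := (scale_mono ht).monotone
  let g : ℕ → X → Y := fun N x => ι (f N x) - φ x
  have hgo : ∀ N, g N o = 0 := fun N => by simp [g, hfo, hφo]
  have hgb : ∀ x, ∀ᶠ N in (U : Filter ℕ), ‖g N x‖ ≤ C * l x + ‖φ x‖ := by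
    intro x
    filter_upwards [hf1 x] with N hN
    refine (norm_sub_le _ _).trans ?_
    rw [ι.norm_map]
    linarith
  -- The choice of `n_k`, given the partial sum `V` of the earlier terms: finitely many conditions.
  have hstage : ∀ (k : ℕ) (V : X → Y), ∃ N,
      ∀ x ∈ {x | l x ≤ t (k + 4)}, ∀ y ∈ {x | l x ≤ t (k + 4)},
        ‖f N x‖ ≤ C * l x ∧ (d x y ≤ 1 → ‖f N x - f N y‖ ≤ C) ∧
        ‖V x - V y‖ ≤ ‖(V x + weight t k (l x) • g N x) - (V y + weight t k (l y) • g N y)‖ + 1 ∧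
        ∀ᶠ N' in (U : Filter ℕ), ‖weight t k (l x) • g N' x - weight t k (l y) • g N' y‖ ≤
          ‖weight t k (l x) • g N x - weight t k (l y) • g N y‖ + 1 := by
    intro k V
    refine Filter.Eventually.exists (f := (U : Filter ℕ)) ?_
    refine ((hfin _).eventually_all).2 fun x _ => ((hfin _).eventually_all).2 fun y _ => ?_
    have hn := hnull (V x - V y) x y (weight t k (l x)) (weight t k (l y))
    have he := eventually_eventually_le U
      (a := fun N => ‖weight t k (l x) • g N x - weight t k (l y) • g N y‖)
      (b := |weight t k (l x)| * (C * l x + ‖φ x‖) + |weight t k (l y)| * (C * l y + ‖φ y‖)) (by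
        filter_upwards [hgb x, hgb y] with N hx hy
        refine ⟨norm_nonneg _, (norm_sub_le _ _).trans ?_⟩
        rw [norm_smul, norm_smul]
        gcongr <;> simp)
    have h2 : ∀ᶠ N in (U : Filter ℕ), d x y ≤ 1 → ‖f N x - f N y‖ ≤ C := by
      by_cases hxy : d x y ≤ 1
      · filter_upwards [hf2 x y hxy] with N hN _ using hN
      · exact Filter.Eventually.of_forall fun N h => absurd h hxy
    filter_upwards [hf1 x, h2, hn, he] with N h1 h2 hn he
    refine ⟨h1, h2, ?_, he⟩
    rwa [add_sub_add_comm]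
  choose next hnext using hstage
  let V : ℕ → X → Y := fun k => Nat.rec φ
    (fun k W x => W x + weight t k (l x) • g (next k W) x) k
  let n : ℕ → ℕ := fun k => next k (V k)
  have hV : ∀ k x, V (k + 1) x = V k x + weight t k (l x) • g (n k) x := fun k x => rfl
  have hn1 : ∀ k x, l x ≤ t (k + 4) → ‖f (n k) x‖ ≤ C * l x := fun k x hx =>
    (hnext k (V k) x hx x hx).1
  have hn2 : ∀ k x y, l x ≤ t (k + 4) → l y ≤ t (k + 4) → d x y ≤ 1 →
      ‖f (n k) x - f (n k) y‖ ≤ C := fun k x y hx hy => (hnext k (V k) x hx y hy).2.1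
  have hn3 : ∀ k x y, l x ≤ t (k + 4) → l y ≤ t (k + 4) →
      ‖V k x - V k y‖ ≤ ‖V (k + 1) x - V (k + 1) y‖ + 1 := fun k x y hx hy =>
    (hnext k (V k) x hx y hy).2.2.1
  have hn4 : ∀ k x y, l x ≤ t (k + 4) → l y ≤ t (k + 4) → ∀ᶠ N' in (U : Filter ℕ),
      ‖weight t k (l x) • g N' x - weight t k (l y) • g N' y‖ ≤
        ‖weight t k (l x) • g (n k) x - weight t k (l y) • g (n k) y‖ + 1 := fun k x y hx hy =>
    (hnext k (V k) x hx y hy).2.2.2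
  have hVsum : ∀ m x, V m x = φ x + ∑ k ∈ Finset.range m, weight t k (l x) • g (n k) x := by
    intro m x
    induction m with
    | zero => simp [V]
    | succ m ih => rw [hV, ih, Finset.sum_range_succ, add_assoc]
  let F : X → E := fun x => ∑ k ∈ Finset.range (l x + 1), weight t k (l x) • f (n k) x
  have hF : ∀ m x, l x + 1 ≤ t m → F x = ∑ k ∈ Finset.range m, weight t k (l x) • f (n k) x := by
    intro m x hm
    have key : ∀ a b, a ≤ b → l x + 1 ≤ t a →
        ∑ k ∈ Finset.range a, weight t k (l x) • f (n k) x =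
        ∑ k ∈ Finset.range b, weight t k (l x) • f (n k) x := by
      intro a b hab ha
      refine Finset.sum_subset (Finset.range_subset_range.2 hab) fun k _ hk => ?_
      rw [Finset.mem_range, not_lt] at hk
      rw [weight_eq_zero_of_lt ht (ha.trans (htm hk)), zero_smul]
    have hl := (scale_mono ht).le_apply (x := l x + 1)
    rw [key m (max m (l x + 1)) (le_max_left _ _) hm]
    exact key _ _ (le_max_right _ _) hl
  have hFV : ∀ m x, l x + 1 ≤ t m → V m x = ι (F x) := by
    intro m x hm
    rw [hVsum, hF m x hm, map_sum]
    simp only [g, smul_sub, Finset.sum_sub_distrib, ← Finset.sum_smul, sum_weight ht0 hm,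
      one_smul, map_smul]
    abel
  have hFo : F o = 0 := by simp [F, hfo]
  -- The weights at `x` sum to `1`, so `g N x` is the sum of the at most four nonzero terms
  -- `weight t j (l x) • g N x`.
  have hsplit : ∀ k x N, l x + 1 ≤ t (k + 4) → (∀ j < k, weight t j (l x) • g N x = 0) →
      g N x = ∑ i ∈ Finset.range 4, weight t (k + i) (l x) • g N x := by
    intro k x N hx hz
    have h1 : ∑ j ∈ Finset.range (k + 4), weight t j (l x) • g N x = g N x := by
      rw [← Finset.sum_smul, sum_weight ht0 hx, one_smul]
    rw [Finset.sum_range_add, Finset.sum_eq_zero (fun j hj => hz j (Finset.mem_range.1 hj)),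
      zero_add] at h1
    exact h1.symm
  -- The lower bound for pairs of points seen by the same four consecutive weights.
  have hnear : ∀ k x y, l x + 1 ≤ t (k + 4) → l y + 1 ≤ t (k + 4) →
      (∀ j < k, ∀ N, weight t j (l x) • g N x = 0) →
      (∀ j < k, ∀ N, weight t j (l y) • g N y = 0) →
      ρ (d x y) ≤ 9 * ‖F x - F y‖ + 40 := by
    intro k x y hx hy hzx hzy
    have hle : ∀ i, t (k + 4) ≤ t (k + i + 4) := fun i => htm (by omega)
    have hx' : ∀ i, l x ≤ t (k + i + 4) := fun i => by have := hle i; omega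
    have hy' : ∀ i, l y ≤ t (k + i + 4) := fun i => by have := hle i; omega
    have h4 : V (k + 4) x - V (k + 4) y = ι (F x - F y) := by
      rw [hFV _ x hx, hFV _ y hy, map_sub]
    have h0 : V k x - V k y = φ x - φ y := by
      rw [hVsum, hVsum, Finset.sum_eq_zero (fun j hj => hzx j (Finset.mem_range.1 hj) _),
        Finset.sum_eq_zero (fun j hj => hzy j (Finset.mem_range.1 hj) _), add_zero, add_zero]
    have hW : ‖V (k + 4) x - V (k + 4) y‖ = ‖F x - F y‖ := by rw [h4, ι.norm_map]
    have e0 := hn3 (k + 0) x y (hx' 0) (hy' 0)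
    have e1 := hn3 (k + 1) x y (hx' 1) (hy' 1)
    have e2 := hn3 (k + 2) x y (hx' 2) (hy' 2)
    have e3 := hn3 (k + 3) x y (hx' 3) (hy' 3)
    simp only [add_zero, add_assoc, Nat.reduceAdd] at e0 e1 e2 e3
    have hp : ∀ i, ‖weight t (k + i) (l x) • g (n (k + i)) x -
        weight t (k + i) (l y) • g (n (k + i)) y‖ ≤
        ‖V (k + i + 1) x - V (k + i + 1) y‖ + ‖V (k + i) x - V (k + i) y‖ := by
      intro i
      have : weight t (k + i) (l x) • g (n (k + i)) x - weight t (k + i) (l y) • g (n (k + i)) y =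
          (V (k + i + 1) x - V (k + i + 1) y) - (V (k + i) x - V (k + i) y) := by
        rw [hV, hV]; abel
      rw [this]
      exact norm_sub_le _ _
    have hp4 : ∀ i ∈ Finset.range 4, ‖weight t (k + i) (l x) • g (n (k + i)) x -
        weight t (k + i) (l y) • g (n (k + i)) y‖ + 1 ≤ 2 * ‖F x - F y‖ + 9 := by
      intro i hi
      have := hp i
      have hi4 := Finset.mem_range.1 hi
      interval_cases i <;> simp only [add_zero, add_assoc, Nat.reduceAdd] at this ⊢ <;> linarith
    have hev := (Filter.eventually_all_finset (Finset.range 4)).2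
      (fun i _ => hn4 (k + i) x y (hx' i) (hy' i))
    obtain ⟨N, hN, hN3⟩ := (hev.and (hf3 x y)).exists
    have hg1 : ‖g N x - g N y‖ ≤ 4 * (2 * ‖F x - F y‖ + 9) := by
      rw [hsplit k x N hx (fun j hj => hzx j hj N), hsplit k y N hy (fun j hj => hzy j hj N),
        ← Finset.sum_sub_distrib]
      refine (norm_sum_le _ _).trans ?_
      refine (Finset.sum_le_card_nsmul _ _ (2 * ‖F x - F y‖ + 9)
        fun i hi => (hN i hi).trans (hp4 i hi)).trans ?_
      rw [Finset.card_range, nsmul_eq_mul, Nat.cast_ofNat]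
    have hg2 : ‖f N x - f N y‖ ≤ ‖φ x - φ y‖ + ‖g N x - g N y‖ := by
      rw [← ι.norm_map, map_sub]
      have : ι (f N x) - ι (f N y) = (φ x - φ y) + (g N x - g N y) := by simp only [g]; abel
      rw [this]
      exact norm_add_le _ _
    have hφb : ‖φ x - φ y‖ ≤ ‖F x - F y‖ + 4 := by rw [← h0]; linarith
    linarith
  have hzero : ∀ k x, 2 * t k ≤ l x → ∀ j < k, ∀ N, weight t j (l x) • g N x = 0 := by
    intro k x hk j hj N
    rw [weight_eq_zero_of_ge ht, zero_smul]
    have := htm (Nat.succ_le_of_lt hj)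
    simp only [Nat.succ_eq_add_one] at this
    omega
  have hFub : ∀ x, ‖F x‖ ≤ C * l x := by
    intro x
    have hl := (scale_mono ht).le_apply (x := l x + 1)
    calc ‖F x‖ ≤ ∑ k ∈ Finset.range (l x + 1), weight t k (l x) * (C * l x) := by
          refine (norm_sum_le _ _).trans (Finset.sum_le_sum fun k _ => ?_)
          rw [norm_smul, Real.norm_of_nonneg (weight_nonneg ht _ _)]
          by_cases hw : l x ≤ t (k + 4)
          · exact mul_le_mul_of_nonneg_left (hn1 k x hw) (weight_nonneg ht _ _)
          · rw [weight_eq_zero_of_ge ht, zero_mul, zero_mul]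
            have h1 := ht (k + 1)
            have h2 : t (k + 2) ≤ t (k + 4) := htm (by omega)
            simp only [add_assoc, Nat.reduceAdd] at h1
            omega
      _ = C * l x := by rw [← Finset.sum_mul, sum_weight ht0 hl, one_mul]
  refine ⟨F, ?_, ?_⟩
  · intro x y hxy
    obtain ⟨hl1, hl2⟩ := hadj x y hxy
    set m := max (l x) (l y) + 1
    have hm := (scale_mono ht).le_apply (x := m)
    have hxm : l x + 1 ≤ t m := by omega
    have hym : l y + 1 ≤ t m := by omega
    have hsmall : ∀ k, l x < 2 * t (k + 1) ∨ l y < 2 * t (k + 1) →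
        l x ≤ t (k + 4) ∧ l y ≤ t (k + 4) := by
      intro k hk
      have h1 := ht (k + 1)
      have h2 : t (k + 2) ≤ t (k + 4) := htm (by omega)
      simp only [add_assoc, Nat.reduceAdd] at h1
      omega
    have hdecomp : F x - F y = ∑ k ∈ Finset.range m, (weight t k (l x) • (f (n k) x - f (n k) y)
        + (weight t k (l x) - weight t k (l y)) • f (n k) y) := by
      rw [hF m x hxm, hF m y hym, ← Finset.sum_sub_distrib]
      refine Finset.sum_congr rfl fun k _ => ?_
      rw [smul_sub, sub_smul]; abel
    rw [hdecomp]
    have hterm : ∀ k ∈ Finset.range m, ‖weight t k (l x) • (f (n k) x - f (n k) y)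
        + (weight t k (l x) - weight t k (l y)) • f (n k) y‖ ≤
        weight t k (l x) * C + C * (|weight t k (l x) - weight t k (l y)| * l y) := by
      intro k _
      by_cases hk : l x < 2 * t (k + 1) ∨ l y < 2 * t (k + 1)
      · obtain ⟨hx', hy'⟩ := hsmall k hk
        refine (norm_add_le _ _).trans (add_le_add ?_ ?_)
        · rw [norm_smul, Real.norm_of_nonneg (weight_nonneg ht _ _)]
          exact mul_le_mul_of_nonneg_left (hn2 k x y hx' hy' hxy) (weight_nonneg ht _ _)
        · rw [norm_smul, Real.norm_eq_abs, mul_left_comm]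
          exact mul_le_mul_of_nonneg_left (hn1 k y hy') (abs_nonneg _)
      · push Not at hk
        rw [weight_eq_zero_of_ge ht hk.1, weight_eq_zero_of_ge ht hk.2]
        simp
    refine (norm_sum_le _ _).trans ((Finset.sum_le_sum hterm).trans ?_)
    rw [Finset.sum_add_distrib, ← Finset.sum_mul, sum_weight ht0 hxm, ← Finset.mul_sum]
    have := mul_le_mul_of_nonneg_left (sum_abs_weight_sub_le ht m hl1 hl2) hC
    linarith
  · intro M
    have hρD := Filter.eventually_atTop.1 (hρ.eventually_gt_atTop (9 * M + 40))
    obtain ⟨D₁, hD₁⟩ := hρD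
    obtain ⟨m, hm⟩ := exists_nat_gt (9 * (|M| + C) + 40)
    have hsym : ∀ x y, l x ≤ l y → ‖F x - F y‖ ≤ M → d x y ≤ D₁ + 4 * t (m + 3) ∧
        d y x ≤ D₁ + 4 * t (m + 3) := by
      intro x y hxy hM
      obtain ⟨k, hk1, hk2⟩ := exists_scale_index ht0 ht (l x)
      by_cases hfar : l y + 1 ≤ t (k + 4)
      · have h1 := hnear k x y (by omega) hfar (hzero k x hk1) (hzero k y (by omega))
        have h2 := hnear k y x hfar (by omega) (hzero k y (by omega)) (hzero k x hk1)
        rw [norm_sub_rev] at h2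
        constructor
        · by_contra! hc
          have := hD₁ (d x y) (by omega)
          linarith
        · by_contra! hc
          have := hD₁ (d y x) (by omega)
          linarith
      · -- Here `y` lies at a much larger scale than `x`, and `F y` is already too long.
        obtain ⟨k', hk1', hk2'⟩ := exists_scale_index ht0 ht (l y)
        have hkk : k + 3 ≤ k' := by
          by_contra! hc
          have h1 : t (k' + 1) ≤ t (k + 3) := htm (by omega)
          have h2 := ht (k + 3)
          simp only [add_assoc, Nat.reduceAdd] at h2
          omega
        obtain ⟨j, rfl⟩ : ∃ j, k' = j + 1 := ⟨k' - 1, by omega⟩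
        have hxj : l x ≤ t j := by
          have h1 := ht (k + 1)
          have h2 : t (k + 2) ≤ t j := htm (by omega)
          simp only [add_assoc, Nat.reduceAdd] at h1
          omega
        have hyt : l y + 1 ≤ t (j + 1 + 4) := by
          have h1 := ht (j + 1 + 1)
          have h2 : t (j + 1 + 1 + 1) ≤ t (j + 1 + 4) := htm (by omega)
          omega
        have hn := hnear (j + 1) o y (by omega) hyt
          (fun j _ N => by rw [hgo, smul_zero]) (hzero (j + 1) y hk1')
        rw [hdo, hFo, zero_sub, norm_neg] at hn
        have hgrow := htρ j (l y) (by omega)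
        have hFy : ‖F y‖ ≤ C * l x + M := by
          have h1 := norm_sub_norm_le (F y) (F x)
          rw [norm_sub_rev] at h1
          linarith [hFub x]
        have hxj' : (l x : ℝ) ≤ t j := by exact_mod_cast hxj
        have hCx : C * l x ≤ C * t j := mul_le_mul_of_nonneg_left hxj' hC
        have htj : (0 : ℝ) ≤ t j := by positivity
        have hjm : j < m := by
          by_contra! hc
          have hc' : (m : ℝ) ≤ j := by exact_mod_cast hc
          have h1 : ((m : ℝ) + 1) * (t j + 1) ≤ ((j : ℝ) + 1) * (t j + 1) := by gcongr
          have h2 : (9 * (|M| + C) + 40) * (t j + 1 : ℝ) ≤ m * (t j + 1) := by gcongr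
          have h3 := le_abs_self M
          have h4 : 0 ≤ |M| * t j := by positivity
          nlinarith
        have hty : 2 * l y ≤ 4 * t (m + 3) := by
          have h1 : t (j + 1 + 1) ≤ t (m + 3) := htm (by omega)
          omega
        have h1 := hd x y
        have h2 := hd y x
        omega
    refine ⟨D₁ + 4 * t (m + 3), fun x y hM => ?_⟩
    rcases le_total (l x) (l y) with h | h
    · exact (hsym x y h hM).1
    · exact (hsym y x h (by rwa [norm_sub_rev])).2

/-- A sequence of maps that are eventually Lipschitz and coarsely expanding on each pair of points,
with common control, can be glued to a single Lipschitz, coarsely expanding map into the same normed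
space. The limit map takes values in the bidual, where bounded sequences have weak-* limits. -/
theorem exists_glued_map {X : Type} (o : X) (l : X → ℕ) (d : X → X → ℕ)
    (hlo : l o = 0) (hfin : ∀ n, {x | l x ≤ n}.Finite)
    (hd : ∀ x y, d x y ≤ l x + l y) (hdo : ∀ y, d o y = l y)
    (hadj : ∀ x y, d x y ≤ 1 → l x ≤ l y + 1 ∧ l y ≤ l x + 1)
    (U : Ultrafilter ℕ) (f : ℕ → X → E) (hfo : ∀ N, f N o = 0) (C : ℝ) (hC : 0 ≤ C)
    (hf1 : ∀ x, ∀ᶠ N in (U : Filter ℕ), ‖f N x‖ ≤ C * l x)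
    (hf2 : ∀ x y, d x y ≤ 1 → ∀ᶠ N in (U : Filter ℕ), ‖f N x - f N y‖ ≤ C)
    (ρ : ℕ → ℝ) (hρ : Filter.Tendsto ρ Filter.atTop Filter.atTop)
    (hf3 : ∀ x y, ∀ᶠ N in (U : Filter ℕ), ρ (d x y) ≤ ‖f N x - f N y‖) :
    ∃ F : X → E, (∀ x y, d x y ≤ 1 → ‖F x - F y‖ ≤ 5 * C) ∧
      ∀ M : ℝ, ∃ D : ℕ, ∀ x y, ‖F x - F y‖ ≤ M → d x y ≤ D := by
  choose φ hφ using fun x => exists_bidual_limit U (hf1 x)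
  have hφo : φ o = 0 := by
    ext ψ
    refine tendsto_nhds_unique (hφ o ψ) ?_
    simp only [hfo, map_zero]
    exact tendsto_const_nhds
  refine exists_glued_map_of_limit (NormedSpace.inclusionInDoubleDualLi ℝ (E := E)) φ o hφo l d
    hlo hfin hd hdo hadj U f hfo C hC hf1 hf2 ρ hρ hf3 fun u x y a b => ?_
  refine norm_le_norm_add_of_null U u _ fun ψ => ?_
  have h := (((hφ x ψ).sub_const (φ x ψ)).const_mul a).sub
    (((hφ y ψ).sub_const (φ y ψ)).const_mul b)
  rw [sub_self, sub_self, mul_zero, mul_zero, sub_zero] at h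
  exact h

end Gluing

/-! ### Hyperbolicity and asymptotic dimension -/

section Transfer

variable {Γ : Type} [Group Γ] {S : Set Γ} {Z : ℕ → Type} {ρ : ∀ i, Z i → Z i → ℝ} {j : ℕ → ℕ}

lemma eventually_hyperfilter_ge (n : ℕ) : ∀ᶠ N in Filter.hyperfilter ℕ, n ≤ N :=
  Nat.hyperfilter_le_atTop (Filter.eventually_ge_atTop n)

lemma hyp_of_lift {δ : ℝ} (h : FamHyp (fun _ : Unit => Γ) (fun _ => wordDist S) δ)
    (hj : ∀ p : PW Z ρ j, ∃ c : pwZ p → Γ, ∀ a b, wordDist S (c a) (c b) = pwρ p a b) :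
    FamHyp (fun p : PW Z ρ j => pwZ p) (fun p => pwρ p) δ := by
  intro p x y z w
  obtain ⟨c, hc⟩ := hj p
  simp only [← hc]
  exact h () _ _ _ _

/-- Any four points of `Γ` lie in a common ball. -/
lemma hyp_of_balls {δ : ℝ} (h : FamHyp (fun p : PW Z ρ j => pwZ p) (fun p => pwρ p) δ)
    (hball : ∀ N : ℕ, ∃ (p : PW Z ρ j) (e : {x : Γ // wordLength S x ≤ N} ≃ pwZ p),
      ∀ x y, pwρ p (e x) (e y) = wordDist S x.1 y.1) :
    FamHyp (fun _ : Unit => Γ) (fun _ => wordDist S) δ := by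
  intro _ x y z w
  obtain ⟨p, e, he⟩ := hball (max (max (wordLength S x) (wordLength S y))
    (max (wordLength S z) (wordLength S w)))
  have := h p (e ⟨x, by simp⟩) (e ⟨y, by simp⟩) (e ⟨z, by simp⟩) (e ⟨w, by simp⟩)
  simpa only [he] using this

/-- A cover of `Γ` is pulled back along the isometric embedding. -/
lemma asdim_of_lift {k : ℕ} (h : FamAsdimLE (fun _ : Unit => Γ) (fun _ => wordDist S) k)
    (hj : ∀ p : PW Z ρ j, ∃ c : pwZ p → Γ, ∀ a b, wordDist S (c a) (c b) = pwρ p a b) :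
    FamAsdimLE (fun p : PW Z ρ j => pwZ p) (fun p => pwρ p) k := by
  intro R hR
  obtain ⟨D, hD⟩ := h R hR
  obtain ⟨V, hcov, hV⟩ := hD ()
  refine ⟨D, fun p => ?_⟩
  obtain ⟨c, hc⟩ := hj p
  refine ⟨fun i => c ⁻¹' V i, fun z => hcov (c z), fun i a ha b hb hab => ?_⟩
  beta_reduce
  rw [← hc]
  refine hV i _ ha _ hb (Relation.ReflTransGen.lift c (fun x y hxy => ?_) _ _ hab)
  exact ⟨hxy.1, hxy.2.1, (hc x y).trans_lt hxy.2.2⟩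

/-- The covers of the balls have an ultralimit: a point of `Γ` belongs to the `i`-th set if it does
so in almost all balls. -/
lemma asdim_of_balls {k : ℕ} (h : FamAsdimLE (fun p : PW Z ρ j => pwZ p) (fun p => pwρ p) k)
    (hball : ∀ N : ℕ, ∃ (p : PW Z ρ j) (e : {x : Γ // wordLength S x ≤ N} ≃ pwZ p),
      ∀ x y, pwρ p (e x) (e y) = wordDist S x.1 y.1) :
    FamAsdimLE (fun _ : Unit => Γ) (fun _ => wordDist S) k := by
  intro R hR
  obtain ⟨D, hD⟩ := h R hR
  refine ⟨D, fun _ => ?_⟩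
  choose p e he using hball
  choose V hcov hV using fun N => hD (p N)
  let U : Ultrafilter ℕ := Filter.hyperfilter ℕ
  refine ⟨fun i => {x | ∀ᶠ N in (U : Filter ℕ), ∃ hx : wordLength S x ≤ N, e N ⟨x, hx⟩ ∈ V N i},
    fun x => ?_, fun i a ha b hb hab => ?_⟩
  · have : ∀ᶠ N in (U : Filter ℕ), ∃ i, ∃ hx : wordLength S x ≤ N, e N ⟨x, hx⟩ ∈ V N i := by
      filter_upwards [eventually_hyperfilter_ge (wordLength S x)] with N hN
      obtain ⟨i, hi⟩ := hcov N (e N ⟨x, hN⟩)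
      exact ⟨i, hN, hi⟩
    exact Ultrafilter.eventually_exists_iff.1 this
  · have hpath : ∀ᶠ N in (U : Filter ℕ), ∃ (hx : wordLength S a ≤ N) (hy : wordLength S b ≤ N),
        RConn (pwρ (p N)) R (V N i) (e N ⟨a, hx⟩) (e N ⟨b, hy⟩) := by
      clear hb
      induction hab with
      | refl => exact ha.mono fun N ⟨hx, _⟩ => ⟨hx, hx, .refl⟩
      | tail _ hst ih =>
        filter_upwards [ih, hst.1, hst.2.1] with N ⟨hx, hy, hc⟩ ⟨hy', hyV⟩ ⟨hz, hzV⟩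
        exact ⟨hx, hz, hc.tail ⟨hyV, hzV, by rw [he]; exact hst.2.2⟩⟩
    obtain ⟨N, ⟨hx, hy, hc⟩, ⟨_, haV⟩, ⟨_, hbV⟩⟩ := (hpath.and (ha.and hb)).exists
    exact (he N _ _).symm.trans_le (hV N i _ haV _ hbV hc)

end Transfer

/-! ### Property A -/

section PropertyA

variable {Γ : Type} [Group Γ] {S : Set Γ} {Z : ℕ → Type} {ρ : ∀ i, Z i → Z i → ℝ} {j : ℕ → ℕ}

/-- Property A passes to isometrically embedded subspaces: push the measures forward along a nearest
point map. -/
lemma propA_of_lift (hS : IsFinSymmGen S)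
    (h : FamPropA (fun _ : Unit => Γ) (fun _ => wordDist S))
    (hj : ∀ p : PW Z ρ j, ∃ c : pwZ p → Γ, ∀ a b, wordDist S (c a) (c b) = pwρ p a b) :
    FamPropA (fun p : PW Z ρ j => pwZ p) (fun p => pwρ p) := by
  intro R hR
  obtain ⟨Sb, hSb⟩ := h R hR
  obtain ⟨f, hf0, hf1, hfs, hfR⟩ := hSb ()
  beta_reduce at f hf0 hf1 hfs hfR
  refine ⟨2 * Sb, fun p => ?_⟩
  obtain ⟨c, hc⟩ := hj p
  rcases isEmpty_or_nonempty (pwZ p) with hemp | hne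
  · exact ⟨fun x => isEmptyElim x, fun x => isEmptyElim x, fun x => isEmptyElim x,
      fun x => isEmptyElim x, fun x => isEmptyElim x⟩
  have hq : ∀ x : Γ, ∃ a : pwZ p, ∀ b, wordDist S x (c a) ≤ wordDist S x (c b) := by
    intro x
    let l : pwZ p → ℕ := fun a => wordLength S (x⁻¹ * c a)
    exact ⟨Function.argmin l, fun b => Nat.cast_le.2 (not_lt.1 (Function.not_lt_argmin l b))⟩
  choose q hq using hq
  have hsum : ∀ x, Summable (f x) := fun x => (hf1 x).summable
  let f' : pwZ p → pwZ p → ℝ := fun a b => ∑' y : {y // q y = b}, f (c a) y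
  have hfib : ∀ a b, HasSum (fun y : {y // q y = b} => f (c a) y) (f' a b) := fun a b =>
    ((hsum (c a)).subtype _).hasSum
  refine ⟨f', fun a b => tsum_nonneg fun y => hf0 _ _, fun a => ?_, fun a b hab => ?_,
    fun a a' haa => ?_⟩
  · exact HasSum.sigma ((Equiv.sigmaFiberEquiv q).hasSum_iff.2 (hf1 (c a))) (fun b => hfib a b)
  · obtain ⟨⟨y, rfl⟩, hy⟩ : ∃ y : {y // q y = b}, f (c a) y ≠ 0 := by
      by_contra! hcon
      exact hab (by simp only [f', hcon, tsum_zero])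
    have h1 := hfs _ _ hy
    have h2 := hq y a
    have h3 := wordDist_triangle hS (c a) y (c (q y))
    rw [wordDist_comm hS y (c a)] at h2
    rw [hc] at h3
    push_cast
    linarith
  · have hd : Summable fun y => |f (c a) y - f (c a') y| := ((hsum _).sub (hsum _)).abs
    have hd' := (Equiv.sigmaFiberEquiv q).summable_iff.2 hd
    have hle : ∀ b, |f' a b - f' a' b| ≤ ∑' y : {y // q y = b}, |f (c a) y - f (c a') y| := by
      intro b
      rw [← ((hfib a b).sub (hfib a' b)).tsum_eq]
      have hb : Summable fun y : {y // q y = b} => ‖f (c a) y - f (c a') y‖ :=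
        hd.comp_injective Subtype.val_injective
      exact norm_tsum_le_tsum_norm hb
    refine le_trans ?_ (hfR (c a) (c a') (by rw [hc]; exact haa))
    have hs : Summable fun b => ∑' y : {y // q y = b}, |f (c a) y - f (c a') y| := hd'.sigma
    have he : ∑' y, |f (c a) y - f (c a') y| =
        ∑' b, ∑' y : {y // q y = b}, |f (c a) y - f (c a') y| :=
      ((Equiv.sigmaFiberEquiv q).tsum_eq _).symm.trans hd'.tsum_sigma
    rw [he]
    exact (hs.of_nonneg_of_le (fun b => abs_nonneg _) hle).tsum_le_tsum hle hs

/-- The measures on the balls have a pointwise ultralimit; as their supports stay in a fixed finite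
set, no mass is lost. -/
lemma propA_of_balls (hS : IsFinSymmGen S)
    (h : FamPropA (fun p : PW Z ρ j => pwZ p) (fun p => pwρ p))
    (hball : ∀ N : ℕ, ∃ (p : PW Z ρ j) (e : {x : Γ // wordLength S x ≤ N} ≃ pwZ p),
      ∀ x y, pwρ p (e x) (e y) = wordDist S x.1 y.1) :
    FamPropA (fun _ : Unit => Γ) (fun _ => wordDist S) := by
  classical
  intro R hR
  obtain ⟨Sb, hSb⟩ := h R hR
  refine ⟨Sb, fun _ => ?_⟩
  have hex : ∀ N : ℕ, ∃ f : Γ → Γ → ℝ, (∀ x y, 0 ≤ f x y) ∧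
      (∀ x, wordLength S x ≤ N → HasSum (f x) 1) ∧
      (∀ x y, f x y ≠ 0 → wordDist S x y ≤ Sb) ∧
      ∀ x x', wordLength S x ≤ N → wordLength S x' ≤ N → wordDist S x x' ≤ R →
        (∑' y, |f x y - f x' y|) ≤ 1 / R := by
    intro N
    obtain ⟨p, e, he⟩ := hball N
    obtain ⟨f, hf0, hf1, hfs, hfR⟩ := hSb p
    beta_reduce at f hf0 hf1 hfs hfR
    let f' : Γ → Γ → ℝ := fun x y => if hxy : wordLength S x ≤ N ∧ wordLength S y ≤ N then
      f (e ⟨x, hxy.1⟩) (e ⟨y, hxy.2⟩) else 0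
    have hf' : ∀ x (hx : wordLength S x ≤ N) (y : {y // wordLength S y ≤ N}),
        f' x y = f (e ⟨x, hx⟩) (e y) := fun x hx y => dif_pos ⟨hx, y.2⟩
    have hout : ∀ x, ∀ y ∉ Set.range (Subtype.val : {y // wordLength S y ≤ N} → Γ), f' x y = 0 := by
      intro x y hy
      refine dif_neg fun hxy => hy ⟨⟨y, hxy.2⟩, rfl⟩
    refine ⟨f', fun x y => ?_, fun x hx => ?_, fun x y hxy => ?_, fun x x' hx hx' hxx => ?_⟩
    · by_cases hxy : wordLength S x ≤ N ∧ wordLength S y ≤ N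
      · simp only [f', dif_pos hxy]; exact hf0 _ _
      · simp only [f', dif_neg hxy]; exact le_rfl
    · refine (Function.Injective.hasSum_iff Subtype.val_injective (hout x)).1 ?_
      rw [show f' x ∘ Subtype.val = f (e ⟨x, hx⟩) ∘ e from funext (hf' x hx)]
      exact e.hasSum_iff.2 (hf1 (e ⟨x, hx⟩))
    · by_cases hc : wordLength S x ≤ N ∧ wordLength S y ≤ N
      · simp only [f', dif_pos hc] at hxy
        have := hfs _ _ hxy
        rwa [he] at this
      · simp only [f', dif_neg hc] at hxy
        exact absurd rfl hxy
    · have := hfR (e ⟨x, hx⟩) (e ⟨x', hx'⟩) (by rw [he]; exact hxx)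
      rw [← e.tsum_eq] at this
      rw [← Function.Injective.tsum_eq (g := (Subtype.val : {y // wordLength S y ≤ N} → Γ))
        Subtype.val_injective]
      · simpa only [hf' x hx, hf' x' hx'] using this
      · intro y hy
        by_contra hc
        exact hy (by simp [hout x y hc, hout x' y hc])
  choose f hf0 hf1 hfs hfR using hex
  have hT : ∀ x, ∃ T : Finset Γ, ∀ y ∉ T, ∀ N, f N x y = 0 := by
    intro x
    refine ⟨((finite_ball hS Sb).image (x * ·)).toFinset, fun y hy N => ?_⟩
    by_contra hc
    refine hy ((Set.Finite.mem_toFinset _).2 ⟨x⁻¹ * y, ?_, by simp⟩)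
    have := hfs N x y hc
    unfold wordDist at this
    exact_mod_cast this
  choose T hT using hT
  have hlim : ∀ x y, ∃ l, Filter.Tendsto (fun N => f N x y) (Filter.hyperfilter ℕ) (nhds l) := by
    intro x y
    refine exists_tendsto_of_bounded _ (a := 0) (b := 1) ?_
    filter_upwards [eventually_hyperfilter_ge (wordLength S x)] with N hN
    exact ⟨hf0 N x y, le_hasSum (hf1 N x hN) y fun z _ => hf0 N x z⟩
  choose F hF using hlim
  have hFT : ∀ x, ∀ y ∉ T x, F x y = 0 := by
    intro x y hy
    refine tendsto_nhds_unique (hF x y) ?_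
    simp only [hT x y hy]
    exact tendsto_const_nhds
  refine ⟨F, fun x y => ge_of_tendsto' (hF x y) fun N => hf0 N x y, fun x => ?_, fun x y hxy => ?_,
    fun x x' hxx => ?_⟩
  · have h1 : ∑ y ∈ T x, F x y = 1 := by
      refine tendsto_nhds_unique (tendsto_finsetSum (T x) fun y _ => hF x y) ?_
      refine (tendsto_const_nhds (x := (1 : ℝ))).congr' ?_
      filter_upwards [eventually_hyperfilter_ge (wordLength S x)] with N hN
      exact (hf1 N x hN).unique (hasSum_sum_of_ne_finset_zero fun y hy => hT x y hy N)
    rw [← h1]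
    exact hasSum_sum_of_ne_finset_zero (hFT x)
  · by_contra hc
    refine hxy (tendsto_nhds_unique (hF x y) ?_)
    have : ∀ N, f N x y = 0 := fun N => by_contra fun h0 => hc (hfs N x y h0)
    simp only [this]
    exact tendsto_const_nhds
  · have hz : ∀ y ∉ T x ∪ T x', |F x y - F x' y| = 0 := by
      intro y hy
      rw [Finset.mem_union, not_or] at hy
      rw [hFT x y hy.1, hFT x' y hy.2, sub_zero, abs_zero]
    rw [tsum_eq_sum hz]
    refine le_of_tendsto (tendsto_finsetSum _ fun y _ => ((hF x y).sub (hF x' y)).abs) ?_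
    filter_upwards [eventually_hyperfilter_ge (wordLength S x),
      eventually_hyperfilter_ge (wordLength S x')] with N hN hN'
    refine le_trans (le_of_eq (tsum_eq_sum fun y hy => ?_).symm) (hfR N x x' hN hN' hxx)
    rw [Finset.mem_union, not_or] at hy
    rw [hT x y hy.1, hT x' y hy.2, sub_zero, abs_zero]

end PropertyA

/-! ### Coarse embeddings -/

section CoarseEmbedding

variable {Γ : Type} [Group Γ] {S : Set Γ} {Z : ℕ → Type} {ρ : ∀ i, Z i → Z i → ℝ} {j : ℕ → ℕ}
  {E : Type} [NormedAddCommGroup E]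

lemma ce_of_lift (h : FamCE (fun _ : Unit => Γ) (fun _ => wordDist S) (fun a b : E => dist a b))
    (hj : ∀ p : PW Z ρ j, ∃ c : pwZ p → Γ, ∀ a b, wordDist S (c a) (c b) = pwρ p a b) :
    FamCE (fun p : PW Z ρ j => pwZ p) (fun p => pwρ p) (fun a b : E => dist a b) := by
  obtain ⟨f, ρm, ρp, hm, hp, hmt, hpt, hf⟩ := h
  choose c hc using hj
  refine ⟨fun p a => f () (c p a), ρm, ρp, hm, hp, hmt, hpt, fun p a b => ?_⟩
  have := hf () (c p a) (c p b)
  beta_reduce at this ⊢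
  rwa [hc] at this

/-- A map vanishing at `1` and moving neighbouring points of a ball by at most `K` grows at rate at
most `K` on that ball: follow a geodesic, which stays inside the ball. -/
lemma norm_sub_le_of_adj (hS : IsFinSymmGen S) {F : Γ → E} {K : ℝ} (hK : 0 ≤ K) {r : ℕ}
    (hF : ∀ x y, wordLength S x ≤ r → wordLength S y ≤ r → wordLength S (x⁻¹ * y) ≤ 1 →
      ‖F x - F y‖ ≤ K) (h1 : F 1 = 0) :
    ∀ y, wordLength S y ≤ r → ‖F y‖ ≤ K * wordLength S y := by
  suffices h : ∀ n y, wordLength S y ≤ n → n ≤ r → ‖F y‖ ≤ K * n from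
    fun y hy => h _ y le_rfl hy
  intro n
  induction n with
  | zero =>
    intro y hy _
    rw [eq_one_of_wordLength hS (Nat.le_zero.1 hy), h1]
    simp
  | succ n ih =>
    intro y hy hr
    rcases Nat.lt_or_ge (wordLength S y) (n + 1) with hlt | hge
    · refine (ih y (by omega) (by omega)).trans (mul_le_mul_of_nonneg_left ?_ hK)
      exact_mod_cast n.le_succ
    · obtain ⟨z, s, rfl, hz, hs⟩ := exists_penultimate hS (le_antisymm hy hge)
      have h2 := hF (z * s) z (by omega) (by omega) (by
        rw [mul_inv_rev, inv_mul_cancel_right, wordLength_inv hS]; exact hs)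
      have h3 := norm_le_norm_add_norm_sub' (F (z * s)) (F z)
      have h4 := ih z hz (by omega)
      push_cast
      linarith

/-- A Lipschitz map expanding at infinity admits control functions as in the definition of a coarse
embedding. -/
lemma ce_of_expanding (hS : IsFinSymmGen S) {F : Γ → E} {K : ℝ} (hK : 0 ≤ K)
    (hF : ∀ x y, wordLength S (x⁻¹ * y) ≤ 1 → ‖F x - F y‖ ≤ K)
    (hM : ∀ M : ℝ, ∃ D : ℕ, ∀ x y, ‖F x - F y‖ ≤ M → wordLength S (x⁻¹ * y) ≤ D) :
    FamCE (fun _ : Unit => Γ) (fun _ => wordDist S) (fun a b : E => dist a b) := by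
  have hlip : ∀ x y, ‖F x - F y‖ ≤ K * wordDist S x y := by
    intro x y
    have := norm_sub_le_of_adj hS (F := fun z => F (x * z) - F x) hK
      (r := wordLength S (x⁻¹ * y)) (fun a b _ _ hab => by
        rw [sub_sub_sub_cancel_right]
        exact hF _ _ (by rwa [mul_inv_rev, mul_assoc, inv_mul_cancel_left])) (by simp)
        (x⁻¹ * y) le_rfl
    rwa [mul_inv_cancel_left, norm_sub_rev] at this
  -- The values `s` with `r ≤ s` keep the set nonempty when no pair of points is `r` apart.
  let A : ℝ → Set ℝ := fun r =>
    {s | (∃ x y, r ≤ wordDist S x y ∧ s = ‖F x - F y‖) ∨ (r ≤ s ∧ 0 ≤ s)}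
  have hA0 : ∀ r, BddBelow (A r) := by
    refine fun r => ⟨0, ?_⟩
    rintro s (⟨x, y, -, rfl⟩ | hs)
    exacts [norm_nonneg _, hs.2]
  have hAne : ∀ r, (A r).Nonempty := fun r => ⟨max r 0, Or.inr ⟨le_max_left _ _, le_max_right _ _⟩⟩
  have hmono : Monotone fun r => sInf (A r) := by
    intro r r' hr
    refine csInf_le_csInf (hA0 r) (hAne r') ?_
    rintro s (⟨x, y, h, rfl⟩ | hs)
    exacts [Or.inl ⟨x, y, hr.trans h, rfl⟩, Or.inr ⟨hr.trans hs.1, hs.2⟩]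
  refine ⟨fun _ => F, fun r => sInf (A r), fun r => (K + 1) * r, hmono,
    fun r r' hr => mul_le_mul_of_nonneg_left hr (by positivity), ?_,
    Filter.tendsto_id.const_mul_atTop (by positivity), fun _ x y => ⟨?_, ?_⟩⟩
  · refine Filter.tendsto_atTop_atTop.2 fun M => ?_
    obtain ⟨D, hD⟩ := hM M
    refine ⟨max M (D + 1), fun r hr => le_csInf (hAne r) ?_⟩
    rintro s (⟨x, y, h, rfl⟩ | hs)
    · by_contra! hc
      have h1 : (wordDist S x y : ℝ) ≤ D := Nat.cast_le.2 (hD x y hc.le)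
      linarith [le_max_right M (D + 1 : ℝ)]
    · exact (le_max_left _ _).trans (hr.trans hs.1)
  · beta_reduce
    rw [dist_eq_norm]
    exact csInf_le (hA0 _) (Or.inl ⟨x, y, le_rfl, rfl⟩)
  · beta_reduce
    rw [dist_eq_norm]
    have h0 : (0 : ℝ) ≤ wordDist S x y := Nat.cast_nonneg _
    linarith [hlip x y]

/-- Coarse embeddings of the balls, normalised to vanish at `1`, glue to one of the group. They
cannot be combined by an ultralimit, as the ultrapower of `E` need not embed into `E`. -/
lemma ce_of_balls [NormedSpace ℝ E] (hS : IsFinSymmGen S)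
    (h : FamCE (fun p : PW Z ρ j => pwZ p) (fun p => pwρ p) (fun a b : E => dist a b))
    (hball : ∀ N : ℕ, ∃ (p : PW Z ρ j) (e : {x : Γ // wordLength S x ≤ N} ≃ pwZ p),
      ∀ x y, pwρ p (e x) (e y) = wordDist S x.1 y.1) :
    FamCE (fun _ : Unit => Γ) (fun _ => wordDist S) (fun a b : E => dist a b) := by
  classical
  obtain ⟨f, ρm, ρp, -, hp, hmt, -, hf⟩ := h
  choose p e he using hball
  let g : ℕ → Γ → E := fun N x => if hx : wordLength S x ≤ N then
    f (p N) (e N ⟨x, hx⟩) - f (p N) (e N ⟨1, by simp [wordLength_one]⟩) else 0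
  have hg : ∀ N x y, wordLength S x ≤ N → wordLength S y ≤ N →
      ρm (wordDist S x y) ≤ ‖g N x - g N y‖ ∧ ‖g N x - g N y‖ ≤ ρp (wordDist S x y) := by
    intro N x y hx hy
    have := hf (p N) (e N ⟨x, hx⟩) (e N ⟨y, hy⟩)
    beta_reduce at this
    rw [he, dist_eq_norm] at this
    simpa only [g, dif_pos hx, dif_pos hy, sub_sub_sub_cancel_right] using this
  have hg1 : ∀ N, g N 1 = 0 := by
    intro N
    simp only [g]
    split_ifs <;> simp
  set C := max (ρp 1) 0
  have hC : 0 ≤ C := le_max_right _ _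
  have hadj : ∀ N x y, wordLength S x ≤ N → wordLength S y ≤ N → wordLength S (x⁻¹ * y) ≤ 1 →
      ‖g N x - g N y‖ ≤ C := by
    intro N x y hx hy hxy
    refine (hg N x y hx hy).2.trans ((hp ?_).trans (le_max_left _ _))
    unfold wordDist
    exact_mod_cast hxy
  have hev : ∀ x y, ∀ᶠ N in Filter.hyperfilter ℕ, wordLength S x ≤ N ∧ wordLength S y ≤ N :=
    fun x y => (eventually_hyperfilter_ge _).and (eventually_hyperfilter_ge _)
  obtain ⟨F, hF, hM⟩ := exists_glued_map (1 : Γ) (wordLength S) (fun x y => wordLength S (x⁻¹ * y))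
    wordLength_one (finite_ball hS)
    (fun x y => by have := wordLength_mul_le hS x⁻¹ y; rwa [wordLength_inv hS] at this)
    (fun y => by simp)
    (fun x y hxy => by
      have h1 := wordLength_mul_le hS x (x⁻¹ * y)
      have h2 := wordLength_mul_le hS y (x⁻¹ * y)⁻¹
      rw [mul_inv_cancel_left] at h1
      rw [wordLength_inv hS, mul_inv_rev, inv_inv, mul_inv_cancel_left] at h2
      omega)
    (Filter.hyperfilter ℕ) g hg1 C hC
    (fun x => (hev x x).mono fun N hN => norm_sub_le_of_adj hS hC (hadj N) (hg1 N) x hN.1)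
    (fun x y hxy => (hev x y).mono fun N hN => hadj N x y hN.1 hN.2 hxy)
    (fun n => ρm n) (hmt.comp tendsto_natCast_atTop_atTop)
    (fun x y => (hev x y).mono fun N hN => (hg N x y hN.1 hN.2).1)
  exact ce_of_expanding hS (by positivity) hF hM

end CoarseEmbedding

theorem box_space_piecewise_characterisation_of_group_properties
    {Γ : Type} [Group Γ] (S : Set Γ) (hS : IsFinSymmGen S)
    -- the box space data: a nested sequence of finite-index normal subgroups
    -- with trivial intersection (in particular Γ is residually finite)
    (Gsub : ℕ → Subgroup Γ)
    (hnorm : ∀ i, (Gsub i).Normal)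
    (hfin : ∀ i, (Gsub i).index ≠ 0)
    (hnested : ∀ i, Gsub (i + 1) ≤ Gsub i)
    (htriv : (⨅ i, Gsub i) = ⊥)
    -- the quotient word metrics on the quotients Γ/Γ_i
    (dQ : ∀ i, Γ ⧸ Gsub i → Γ ⧸ Gsub i → ℝ)
    (hdQ : ∀ (i : ℕ) (g h : Γ),
      dQ i (QuotientGroup.mk g) (QuotientGroup.mk h) =
        sInf ((fun n => (wordLength S (g⁻¹ * h * n) : ℝ)) '' (Gsub i : Set Γ)))
    (δ : ℝ) (k : ℕ)
    (E : Type) [NormedAddCommGroup E] [NormedSpace ℝ E] [CompleteSpace E] :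
    -- δ-hyperbolicity
    ((FamHyp (fun _ : Unit => Γ) (fun _ => wordDist S) δ ↔
      ∃ j : ℕ → ℕ, FamHyp (fun p : PW (fun i => Γ ⧸ Gsub i) dQ j => pwZ p)
        (fun p => pwρ p) δ) ∧
    -- property A
    (FamPropA (fun _ : Unit => Γ) (fun _ => wordDist S) ↔
      ∃ j : ℕ → ℕ, FamPropA (fun p : PW (fun i => Γ ⧸ Gsub i) dQ j => pwZ p)
        (fun p => pwρ p)) ∧
    -- asymptotic dimension at most k
    (FamAsdimLE (fun _ : Unit => Γ) (fun _ => wordDist S) k ↔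
      ∃ j : ℕ → ℕ, FamAsdimLE (fun p : PW (fun i => Γ ⧸ Gsub i) dQ j => pwZ p)
        (fun p => pwρ p) k) ∧
    -- coarse embeddability into the Banach space E
    (FamCE (fun _ : Unit => Γ) (fun _ => wordDist S) (fun a b : E => dist a b) ↔
      ∃ j : ℕ → ℕ, FamCE (fun p : PW (fun i => Γ ⧸ Gsub i) dQ j => pwZ p)
        (fun p => pwρ p) (fun a b : E => dist a b))) := by
  have hball := exists_ball_equiv hS hnested htriv hdQ
  obtain ⟨j, hj⟩ := exists_threshold_lift hS hnested htriv hdQ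
  exact ⟨⟨fun h => ⟨j, hyp_of_lift h hj⟩, fun ⟨j', h⟩ => hyp_of_balls h (hball j')⟩,
    ⟨fun h => ⟨j, propA_of_lift hS h hj⟩, fun ⟨j', h⟩ => propA_of_balls hS h (hball j')⟩,
    ⟨fun h => ⟨j, asdim_of_lift h hj⟩, fun ⟨j', h⟩ => asdim_of_balls h (hball j')⟩,
    ⟨fun h => ⟨j, ce_of_lift h hj⟩, fun ⟨j', h⟩ => ce_of_balls hS h (hball j')⟩⟩
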